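/- Let (R,m,k) be a one-dimensional Noetherian reduced local ring with finitely generated integral closure S and uncountable residue field k, and let x be a minimal reduction of m. Then λ_R(̄(m²)/xm) = dim_k((R+mS)/(R+m²S)). -/

import Mathlib

open IsLocalRing

/-- The length of a module, expressed as the Krull dimension of its lattice of submodules. -/
noncomputable def moduleLength (R M : Type*) [Ring R] [AddCommGroup M] [Module R M] :
    WithBot ℕ∞ :=
  Order.krullDim (Submodule R M)

/-- The set of elements of `R` integral over the ideal `I`. -/
def idealIntCl {R : Type*} [CommRing R] (I : Ideal R) : Set R :=
  {y | ∃ n : ℕ, 0 < n ∧ ∃ a : ℕ → R, (∀ i, 1 ≤ i → i ≤ n → a i ∈ I ^ i) ∧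
    y ^ n + ∑ i ∈ Finset.Icc 1 n, a i * y ^ (n - i) = 0}

/-- The integral closure of an ideal `I`, as an ideal (the set `idealIntCl I` is an ideal, so
the ideal it generates coincides with it). -/
def idealIntClI {R : Type*} [CommRing R] (I : Ideal R) : Ideal R :=
  Ideal.span (idealIntCl I)

/-!
A reduction `(x)` of `I` has the same integral closure as `I`, and principal ideals generated by a
regular element of the integrally closed ring `S` are integrally closed. Hence `IS = xS`, and by
the determinant trick the integral closure of `I ^ i` is `xⁱS ∩ R`. Multiplication by `x` is
injective on `S`, so it preserves lengths, and it does not change the length of `N / xN` when `N`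
is replaced by a submodule of finite colength. Applying this to `R ∩ xS ⊆ xS` and splitting both
lengths by the modular law gives `λ((R ∩ x²S) / x(R ∩ xS)) = λ((R + xS) / (R + x²S))`.
-/

section RelativeLength

variable {R M M' : Type*} [Ring R] [AddCommGroup M] [Module R M] [AddCommGroup M'] [Module R M']

/-- The length of `N / (N ⊓ P)` for submodules `N` and `P` of a module. It takes values in `ℕ∞`
rather than in `WithBot ℕ∞`, so that finite lengths can be cancelled. -/
noncomputable def relLength (N P : Submodule R M) : ℕ∞ :=
  Module.length R (N ⧸ P.comap N.subtype)

lemma coe_relLength (N P : Submodule R M) :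
    (relLength N P : WithBot ℕ∞) = moduleLength R (N ⧸ P.comap N.subtype) :=
  Module.coe_length R _

lemma relLength_add {P N L : Submodule R M} (hPN : P ≤ N) (hNL : N ≤ L) :
    relLength L P = relLength N P + relLength L N := by
  have hcomap : P.comap N.subtype = (P.comap L.subtype).comap (Submodule.inclusion hNL) := rfl
  have hle : P.comap L.subtype ≤ N.comap L.subtype := Submodule.comap_mono hPN
  refine Module.length_eq_add_of_exact (Submodule.mapQ _ _ (Submodule.inclusion hNL) hcomap.le)
    (Submodule.factor hle) ?_ (Submodule.factor_surjective hle) ?_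
  · rw [← LinearMap.ker_eq_bot, Submodule.ker_mapQ, ← hcomap]
    exact Submodule.mkQ_map_self _
  · rw [LinearMap.exact_iff, Submodule.range_mapQ, Submodule.range_inclusion]
    exact Submodule.ker_mapQ _ _ _ _

lemma relLength_inf (N P : Submodule R M) : relLength N (N ⊓ P) = relLength N P := by
  rw [relLength, relLength, Submodule.comap_inf, Submodule.comap_subtype_self, top_inf_eq]

lemma relLength_sup (N P : Submodule R M) : relLength (N ⊔ P) P = relLength N P := by
  rw [← relLength_inf N P, relLength, relLength, Submodule.comap_inf]
  exact (LinearMap.quotientInfEquivSupQuotient N P).symm.length_eq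

lemma relLength_sup_sup_of_le {U X Y : Submodule R M} (hYX : Y ≤ X) :
    relLength (U ⊔ X) (U ⊔ Y) = relLength X (U ⊓ X ⊔ Y) := by
  have hsup : X ⊔ (U ⊔ Y) = U ⊔ X := by rw [sup_left_comm, sup_eq_left.2 hYX]
  have hinf : X ⊓ (U ⊔ Y) = U ⊓ X ⊔ Y := by
    rw [inf_comm, sup_comm, sup_inf_assoc_of_le U hYX, sup_comm]
  rw [← hsup, relLength_sup, ← relLength_inf, hinf]

lemma relLength_map {f : M →ₗ[R] M'} (hf : Function.Injective f) (N P : Submodule R M) :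
    relLength (N.map f) (P.map f) = relLength N P := by
  refine (Submodule.Quotient.equiv _ _ (Submodule.equivMapOfInjective f hf N) ?_).symm.length_eq
  ext ⟨_, y, hy, rfl⟩
  simp only [Submodule.mem_map, Submodule.mem_comap, Submodule.subtype_apply]
  constructor
  · rintro ⟨z, hz, h⟩
    exact ⟨z, hz, congrArg Subtype.val h⟩
  · rintro ⟨z, hz, h⟩
    obtain rfl := hf h
    exact ⟨⟨z, hy⟩, hz, rfl⟩

lemma relLength_map_self_eq {f : M →ₗ[R] M} (hf : Function.Injective f) {P X : Submodule R M}
    (hP : P.map f ≤ P) (hX : X.map f ≤ X) (hPX : P ≤ X) (hfin : relLength X P ≠ ⊤) :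
    relLength P (P.map f) = relLength X (X.map f) := by
  refine (WithTop.add_right_inj hfin).1 ?_
  calc relLength P (P.map f) + relLength X P
    _ = relLength X (P.map f) := (relLength_add hP hPX).symm
    _ = relLength (X.map f) (P.map f) + relLength X (X.map f) :=
        relLength_add (Submodule.map_mono hPX) hX
    _ = relLength X (X.map f) + relLength X P := by rw [relLength_map hf, add_comm]

-- With `P = U ⊓ X` and `Y = f X`, both sides are complements of the length of `(P + Y) / Y`:
-- the left one in `P / f P`, the right one in `X / Y`, and these two have the same length.
theorem relLength_inf_map_eq_relLength_sup {f : M →ₗ[R] M} (hf : Function.Injective f)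
    {U X : Submodule R M} (hU : U.map f ≤ U) (hX : X.map f ≤ X)
    (hXU : relLength X U ≠ ⊤) (hXX : relLength X (X.map f) ≠ ⊤) :
    relLength (U ⊓ X.map f) ((U ⊓ X).map f) = relLength (U ⊔ X) (U ⊔ X.map f) := by
  set P := U ⊓ X
  set Y := X.map f
  have hPX : P ≤ X := inf_le_right
  have hPY : U ⊓ Y = P ⊓ Y := by rw [inf_assoc, inf_eq_right.2 hX]
  have hfP : P.map f ≤ U ⊓ Y := (Submodule.map_inf_le f).trans (inf_le_inf_right Y hU)
  have hP : P.map f ≤ P := hfP.trans (inf_le_inf_left U hX)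
  have hXP : relLength X P ≠ ⊤ := by
    rwa [show P = X ⊓ U from inf_comm _ _, relLength_inf]
  have key : relLength (U ⊓ Y) (P.map f) + relLength P Y = relLength X (P ⊔ Y) + relLength P Y :=
    calc relLength (U ⊓ Y) (P.map f) + relLength P Y
      _ = relLength (U ⊓ Y) (P.map f) + relLength P (U ⊓ Y) := by rw [hPY, relLength_inf]
      _ = relLength P (P.map f) := (relLength_add hfP (inf_le_inf_left U hX)).symm
      _ = relLength X Y := relLength_map_self_eq hf hP hX hPX hXP
      _ = relLength (P ⊔ Y) Y + relLength X (P ⊔ Y) := relLength_add le_sup_right (sup_le hPX hX)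
      _ = relLength X (P ⊔ Y) + relLength P Y := by rw [relLength_sup, add_comm]
  have hPY_fin : relLength P Y ≠ ⊤ := by
    have hle : relLength P Y ≤ relLength X Y := by
      rw [← relLength_sup, relLength_add le_sup_right (sup_le hPX hX)]
      exact le_self_add
    exact ne_top_of_le_ne_top hXX hle
  rw [relLength_sup_sup_of_le hX]
  exact (WithTop.add_right_inj hPY_fin).1 key

lemma relLength_ne_top_of_smul_mem {R M : Type*} [CommRing R] [IsNoetherianRing R]
    [Ring.KrullDimLE 1 R] [AddCommGroup M] [Module R M] [Module.Finite R M] {N P : Submodule R M}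
    {d : R} (hd : d ∈ nonZeroDivisors R) (h : ∀ s ∈ N, d • s ∈ P) : relLength N P ≠ ⊤ := by
  have htors : Module.IsTorsionBy R (N ⧸ P.comap N.subtype) d := by
    rw [Module.isTorsionBy_quotient_iff]
    exact fun s ↦ h s s.2
  let := htors.module
  have : IsArtinian R (R ⧸ Ideal.span {d}) :=
    (isFiniteLength_iff_isNoetherian_isArtinian.1 (isFiniteLength_quotient_span_singleton R hd)).2
  have : IsArtinianRing (R ⧸ Ideal.span {d}) := isArtinian_of_tower R this
  have : IsScalarTower R (R ⧸ Ideal.span {d}) (N ⧸ P.comap N.subtype) :=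
    Module.IsTorsionBySet.isScalarTower _
  have : Module.Finite (R ⧸ Ideal.span {d}) (N ⧸ P.comap N.subtype) :=
    Module.Finite.of_restrictScalars_finite R _ _
  have : IsArtinian R (N ⧸ P.comap N.subtype) :=
    isArtinian_of_surjective_algebraMap (R := R ⧸ Ideal.span {d}) Ideal.Quotient.mk_surjective
  exact Module.length_ne_top

end RelativeLength

section IntegralClosureOfIdeals

variable {R S : Type*} [CommRing R] [CommRing S]

lemma idealIntCl_subset_radical (I : Ideal R) : idealIntCl I ⊆ I.radical := by
  rintro y ⟨n, -, a, ha, hy⟩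
  refine ⟨n, ?_⟩
  rw [eq_neg_of_add_eq_zero_left hy]
  refine neg_mem (sum_mem fun i hi ↦ Ideal.mul_mem_right _ _ ?_)
  obtain ⟨hi1, hin⟩ := Finset.mem_Icc.1 hi
  exact Ideal.pow_le_self (by omega) (ha i hi1 hin)

lemma subset_idealIntCl (I : Ideal R) : (I : Set R) ⊆ idealIntCl I := fun y hy ↦
  ⟨1, one_pos, fun _ ↦ -y, fun i hi hi' ↦ by simpa [le_antisymm hi' hi] using hy, by simp⟩

lemma idealIntClI_eq_self_of_isRadical {I : Ideal R} (hI : I.IsRadical) : idealIntClI I = I :=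
  le_antisymm (Ideal.span_le.2 fun _ hy ↦ hI (idealIntCl_subset_radical I hy))
    fun _ hy ↦ Ideal.subset_span (subset_idealIntCl I hy)

lemma map_mem_idealIntCl (f : R →+* S) {I : Ideal R} {y : R} (hy : y ∈ idealIntCl I) :
    f y ∈ idealIntCl (I.map f) := by
  obtain ⟨n, hn, a, ha, h⟩ := hy
  refine ⟨n, hn, fun i ↦ f (a i), fun i hi hin ↦ ?_, ?_⟩
  · rw [← Ideal.map_pow]
    exact Ideal.mem_map_of_mem f (ha i hi hin)
  · simpa only [map_add, map_sum, map_mul, map_pow, map_zero] using congrArg f h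

open Polynomial in
lemma mem_idealIntCl_of_monic {I : Ideal R} {y : R} {p : R[X]} (hp : p.Monic)
    (hcoeff : ∀ k, p.coeff k ∈ I ^ (p.natDegree - k)) (hy : p.eval y = 0) :
    y ∈ idealIntCl I := by
  by_cases hn : p.natDegree = 0
  · rw [hp.natDegree_eq_zero.1 hn, eval_one] at hy
    have := subsingleton_of_zero_eq_one hy.symm
    exact subset_idealIntCl I (Subsingleton.elim 0 y ▸ I.zero_mem)
  refine ⟨p.natDegree, Nat.pos_of_ne_zero hn, fun i ↦ p.coeff (p.natDegree - i),
    fun i _ hi ↦ ?_, ?_⟩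
  · simpa only [Nat.sub_sub_self hi] using hcoeff (p.natDegree - i)
  · rw [eval_eq_sum_range, ← Finset.sum_range_reflect, Finset.range_eq_Ico,
      Finset.sum_eq_sum_Ico_succ_bot (Nat.succ_pos _)] at hy
    simpa [hp.coeff_natDegree, Nat.sub_sub_self, ← Finset.Ico_add_one_right_eq_Icc] using hy

lemma mem_idealIntCl_of_smul_mem_smul_top {M : Type*} [AddCommGroup M] [Module R M]
    [Module.Finite R M] [FaithfulSMul R M] {I : Ideal R} {y : R}
    (h : ∀ s : M, y • s ∈ I • (⊤ : Submodule R M)) : y ∈ idealIntCl I := by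
  obtain ⟨p, hp, -, hcoeff, hy⟩ :=
    LinearMap.exists_monic_and_natDegree_eq_and_coeff_mem_pow_and_aeval_eq_zero R
      (algebraMap R (Module.End R M) y) I (by rintro _ ⟨s, rfl⟩; exact h s)
  refine mem_idealIntCl_of_monic hp hcoeff (FaithfulSMul.eq_of_smul_eq_smul (α := M) fun s ↦ ?_)
  rw [Polynomial.aeval_algebraMap_apply_eq_algebraMap_eval] at hy
  simpa using LinearMap.congr_fun hy s

lemma faithfulSMul_of_mem_nonZeroDivisors {I : Ideal R} {a : R} (ha : a ∈ I)
    (ha' : a ∈ nonZeroDivisors R) : FaithfulSMul R I where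
  eq_of_smul_eq_smul h :=
    (mul_cancel_right_mem_nonZeroDivisors ha').1 (congrArg Subtype.val (h ⟨a, ha⟩))

lemma subset_idealIntCl_of_mul_le {I J N : Ideal R} [Module.Finite R N] [FaithfulSMul R N]
    (h : I * N ≤ J * N) : (I : Set R) ⊆ idealIntCl J := by
  intro y hy
  refine mem_idealIntCl_of_smul_mem_smul_top (M := N) fun s ↦ ?_
  rw [Submodule.mem_smul_top_iff]
  exact h (Ideal.mul_mem_mul hy s.2)

lemma comap_map_subset_idealIntCl [Algebra R S] [Module.Finite R S] [FaithfulSMul R S]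
    (I : Ideal R) : ((I.map (algebraMap R S)).comap (algebraMap R S) : Set R) ⊆ idealIntCl I := by
  intro y hy
  refine mem_idealIntCl_of_smul_mem_smul_top (M := S) fun s ↦ ?_
  rw [Ideal.smul_top_eq_map, Algebra.smul_def]
  exact Ideal.mul_mem_right s _ hy

open Polynomial in
lemma isIntegral_of_pow_add_sum_eq_zero [Algebra R S] {q : S} {n : ℕ} {b : ℕ → R}
    (h : q ^ n + ∑ i ∈ Finset.Icc 1 n, algebraMap R S (b i) * q ^ (n - i) = 0) :
    IsIntegral R q := by
  refine ⟨X ^ n + ∑ i ∈ Finset.Icc 1 n, C (b i) * X ^ (n - i), monic_X_pow_add ?_, ?_⟩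
  · refine (degree_sum_le _ _).trans_lt ((Finset.sup_lt_iff (WithBot.bot_lt_coe n)).2 fun i hi ↦ ?_)
    have hin : n - i < n := by
      rw [Finset.mem_Icc] at hi
      omega
    exact (degree_C_mul_X_pow_le _ _).trans_lt (Nat.cast_lt.2 hin)
  · simpa only [eval₂_add, eval₂_finsetSum, eval₂_mul, eval₂_pow, eval₂_X, eval₂_C] using h

-- Dividing an equation of integral dependence of `y` over `(d)` by `d ^ n` gives an equation of
-- integral dependence of `y / d` over `S`.
lemma idealIntCl_span_singleton_subset {K : Type*} [CommRing K] [Algebra S K]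
    [IsIntegrallyClosedIn S K] {d : S} (hd : IsUnit (algebraMap S K d)) :
    idealIntCl (Ideal.span {d}) ⊆ Ideal.span {d} := by
  rintro y ⟨n, -, a, ha, hy⟩
  simp only [Ideal.span_singleton_pow, Ideal.mem_span_singleton] at ha
  choose! b hb using ha
  obtain ⟨q, hq⟩ := hd.dvd (a := algebraMap S K y)
  have hq_eq : q ^ n + ∑ i ∈ Finset.Icc 1 n, algebraMap S K (b i) * q ^ (n - i) = 0 := by
    refine ((hd.pow n).mul_right_eq_zero).1 ?_
    rw [← map_zero (algebraMap S K), ← hy, mul_add, ← mul_pow, ← hq, Finset.mul_sum]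
    simp only [map_add, map_sum, map_mul, map_pow]
    congr 1
    refine Finset.sum_congr rfl fun i hi ↦ ?_
    obtain ⟨hi1, hin⟩ := Finset.mem_Icc.1 hi
    rw [hb i hi1 hin, hq, map_mul, map_pow, ← pow_mul_pow_sub (algebraMap S K d) hin]
    ring
  obtain ⟨s, rfl⟩ :=
    IsIntegrallyClosedIn.algebraMap_eq_of_integral (isIntegral_of_pow_add_sum_eq_zero hq_eq)
  rw [← map_mul] at hq
  exact Ideal.mem_span_singleton.2 ⟨s, IsIntegralClosure.algebraMap_injective S S K hq⟩

end IntegralClosureOfIdeals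

section PrincipalReduction

variable {R S K : Type*} [CommRing R] [CommRing S] [CommRing K] [Algebra R S] [Algebra S K]

lemma lsmul_injective_of_isUnit [FaithfulSMul S K] {x : R}
    (hx : IsUnit (algebraMap S K (algebraMap R S x))) :
    Function.Injective (LinearMap.lsmul R S x) := by
  intro s t h
  apply FaithfulSMul.algebraMap_injective S K
  apply hx.mul_right_injective
  simpa only [LinearMap.lsmul_apply, Algebra.smul_def, map_mul] using congrArg (algebraMap S K) h

section

variable [IsIntegrallyClosedIn S K] {I : Ideal R}

lemma map_eq_span_singleton_of_reduction (hI : I.FG) {x : R} (hxI : x ∈ I)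
    (hx : x ∈ nonZeroDivisors R) (hxK : IsUnit (algebraMap S K (algebraMap R S x))) {n : ℕ}
    (hred : I ^ (n + 1) = Ideal.span {x} * I ^ n) :
    I.map (algebraMap R S) = Ideal.span {algebraMap R S x} := by
  have : Module.Finite R ↥(I ^ n) := Module.Finite.iff_fg.2 hI.pow
  have := faithfulSMul_of_mem_nonZeroDivisors (Ideal.pow_mem_pow hxI n) (pow_mem hx n)
  apply le_antisymm
  · refine Ideal.map_le_iff_le_comap.2 fun y hy ↦ ?_
    have hy' : y ∈ idealIntCl (Ideal.span {x}) :=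
      subset_idealIntCl_of_mul_le (N := I ^ n) (by rw [← pow_succ', hred]) hy
    have hy'' := map_mem_idealIntCl (algebraMap R S) hy'
    rw [Ideal.map_span, Set.image_singleton] at hy''
    exact idealIntCl_span_singleton_subset hxK hy''
  · exact (Ideal.span_singleton_le_iff_mem _).2 (Ideal.mem_map_of_mem _ hxI)

variable [Module.Finite R S] [FaithfulSMul R S] {d : S}

lemma idealIntClI_eq_comap_map (hd : IsUnit (algebraMap S K d))
    (h : I.map (algebraMap R S) = Ideal.span {d}) :
    idealIntClI I = (I.map (algebraMap R S)).comap (algebraMap R S) := by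
  apply le_antisymm
  · refine Ideal.span_le.2 fun y hy ↦ ?_
    have hy' := map_mem_idealIntCl (algebraMap R S) hy
    rw [h] at hy' ⊢
    exact idealIntCl_span_singleton_subset hd hy'
  · exact fun y hy ↦ Ideal.subset_span (comap_map_subset_idealIntCl I hy)

lemma map_idealIntClI_eq_inf (hd : IsUnit (algebraMap S K d))
    (h : I.map (algebraMap R S) = Ideal.span {d}) :
    Submodule.map (Algebra.linearMap R S) (idealIntClI I) = 1 ⊓ I • ⊤ := by
  rw [idealIntClI_eq_comap_map hd h, Submodule.one_eq_range, Ideal.smul_top_eq_map]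
  exact Submodule.map_comap_eq (Algebra.linearMap R S) ((I.map (algebraMap R S)).restrictScalars R)

end

lemma map_linearMap_span_singleton_mul (x : R) (J : Ideal R) :
    Submodule.map (Algebra.linearMap R S) (Ideal.span {x} * J) =
      (Submodule.map (Algebra.linearMap R S) J).map (LinearMap.lsmul R S x) := by
  ext s
  simp only [Submodule.mem_map, Ideal.mem_span_singleton_mul]
  constructor
  · rintro ⟨_, ⟨z, hz, rfl⟩, rfl⟩
    exact ⟨_, ⟨z, hz, rfl⟩, by simp [Algebra.smul_def]⟩
  · rintro ⟨_, ⟨z, hz, rfl⟩, rfl⟩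
    exact ⟨_, ⟨z, hz, rfl⟩, by simp [Algebra.smul_def]⟩

lemma smul_top_eq_map_lsmul {I : Ideal R} {x : R}
    (h : I.map (algebraMap R S) = Ideal.span {algebraMap R S x}) :
    (I • ⊤ : Submodule R S) = (⊤ : Submodule R S).map (LinearMap.lsmul R S x) := by
  ext s
  rw [Ideal.smul_top_eq_map, h, Submodule.restrictScalars_mem, Ideal.mem_span_singleton']
  simp [Algebra.smul_def, mul_comm]

lemma sq_smul_top_eq_map_lsmul {I : Ideal R} {x : R}
    (h : I.map (algebraMap R S) = Ideal.span {algebraMap R S x}) :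
    (I ^ 2 • ⊤ : Submodule R S) = (I • ⊤ : Submodule R S).map (LinearMap.lsmul R S x) := by
  rw [Submodule.map_smul'', ← smul_top_eq_map_lsmul h, pow_two, Submodule.mul_smul]

variable (K) [Algebra R K] [IsFractionRing R K] [IsScalarTower R S K]

lemma isUnit_algebraMap_algebraMap {x : R} (hx : x ∈ nonZeroDivisors R) :
    IsUnit (algebraMap S K (algebraMap R S x)) := by
  rw [← IsScalarTower.algebraMap_apply R S K]
  exact IsLocalization.map_units K ⟨x, hx⟩

lemma exists_smul_mem_one [FaithfulSMul S K] [Module.Finite R S] :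
    ∃ c ∈ nonZeroDivisors R, ∀ s : S, c • s ∈ (1 : Submodule R S) := by
  classical
  obtain ⟨t, ht⟩ := Module.Finite.fg_top (R := R) (M := S)
  obtain ⟨c, hc⟩ := IsLocalization.exist_integer_multiples (nonZeroDivisors R) t (algebraMap S K)
  refine ⟨c, c.2, fun s ↦ ?_⟩
  suffices (⊤ : Submodule R S) ≤ (1 : Submodule R S).comap (LinearMap.lsmul R S (c : R)) from
    this trivial
  rw [← ht, Submodule.span_le]
  intro a ha
  obtain ⟨r, hr⟩ := hc a ha
  refine Submodule.mem_one.2 ⟨r, FaithfulSMul.algebraMap_injective S K ?_⟩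
  rw [← IsScalarTower.algebraMap_apply, hr, LinearMap.lsmul_apply, Algebra.smul_def,
    Algebra.smul_def, map_mul, ← IsScalarTower.algebraMap_apply]

end PrincipalReduction

section Regularity

variable {R : Type*} [CommRing R] [IsReduced R]

lemma mul_eq_zero_of_pow_le_span_singleton {I : Ideal R} {x : R} {n : ℕ}
    (h : I ^ n ≤ Ideal.span {x}) {y : R} (hy : y * x = 0) {a : R} (ha : a ∈ I) : a * y = 0 := by
  obtain ⟨z, hz⟩ := Ideal.mem_span_singleton'.1 (h (Ideal.pow_mem_pow ha n))
  refine eq_zero_of_pow_eq_zero (n := n + 1) ?_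
  linear_combination a * y ^ (n + 1) * -hz + a * y ^ n * z * hy

lemma mem_nonZeroDivisors_of_maximalIdeal_pow_le [IsLocalRing R] (hR : ¬ IsField R) {x : R}
    {n : ℕ} (h : maximalIdeal R ^ n ≤ Ideal.span {x}) : x ∈ nonZeroDivisors R := by
  rw [mem_nonZeroDivisors_iff_right]
  intro y hy
  have hmul : ∀ a ∈ maximalIdeal R, a * y = 0 := fun a ha ↦
    mul_eq_zero_of_pow_le_span_singleton h hy ha
  by_cases hyu : IsUnit y
  · refine absurd (isField_iff_maximalIdeal_eq.2 ?_) hR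
    exact (Submodule.eq_bot_iff _).2 fun a ha ↦ hyu.mul_left_eq_zero.1 (hmul a ha)
  · exact eq_zero_of_pow_eq_zero (n := 2) (by rw [pow_two, hmul y ((mem_maximalIdeal y).2 hyu)])

end Regularity

theorem stmt7_general {R S : Type*} (K : Type*) [CommRing R] [IsNoetherianRing R]
    [Ring.KrullDimLE 1 R] [CommRing S] [Algebra R S] [Module.Finite R S] [CommRing K] [Algebra R K]
    [IsFractionRing R K] [Algebra S K] [IsScalarTower R S K] [IsIntegralClosure S R K]
    {I : Ideal R} {x : R} (hxI : x ∈ I) (hx : x ∈ nonZeroDivisors R) {n : ℕ}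
    (hred : I ^ (n + 1) = Ideal.span {x} * I ^ n) :
    moduleLength R (idealIntClI (I ^ 2) ⧸
        Submodule.comap (idealIntClI (I ^ 2)).subtype (Ideal.span {x} * idealIntClI I)) =
      moduleLength R (↥(1 ⊔ I • ⊤ : Submodule R S) ⧸
        Submodule.comap (1 ⊔ I • ⊤ : Submodule R S).subtype (1 ⊔ I ^ 2 • ⊤)) := by
  have := IsIntegralClosure.isIntegral_algebra R (A := S) K
  have : IsIntegrallyClosedIn S K := IsIntegralClosure.tower_top (R := R)
  have : FaithfulSMul R S := FaithfulSMul.tower_bot R S K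
  have : FaithfulSMul S K :=
    (faithfulSMul_iff_algebraMap_injective S K).2 (IsIntegralClosure.algebraMap_injective S R K)
  have hxK : IsUnit (algebraMap S K (algebraMap R S x)) := isUnit_algebraMap_algebraMap K hx
  have hI := map_eq_span_singleton_of_reduction (IsNoetherian.noetherian I) hxI hx hxK hred
  have hI2 : (I ^ 2).map (algebraMap R S) = Ideal.span {algebraMap R S x ^ 2} := by
    rw [Ideal.map_pow, hI, Ideal.span_singleton_pow]
  have hι : Function.Injective (Algebra.linearMap R S) := FaithfulSMul.algebraMap_injective R S
  have hI2K : IsUnit (algebraMap S K (algebraMap R S x ^ 2)) := by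
    rw [map_pow]
    exact hxK.pow 2
  have hle (N : Submodule R S) : N.map (LinearMap.lsmul R S x) ≤ N :=
    Submodule.map_le_iff_le_comap.2 fun s hs ↦ N.smul_mem x hs
  obtain ⟨c, hc, hcS⟩ := exists_smul_mem_one (R := R) (S := S) K
  rw [← coe_relLength, ← coe_relLength, ← relLength_map hι, map_idealIntClI_eq_inf hI2K hI2,
    map_linearMap_span_singleton_mul, map_idealIntClI_eq_inf hxK hI, sq_smul_top_eq_map_lsmul hI]
  exact congrArg _ (relLength_inf_map_eq_relLength_sup (lsmul_injective_of_isUnit hxK)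
    (hle 1) (hle _) (relLength_ne_top_of_smul_mem hc fun s _ ↦ hcS s)
    (relLength_ne_top_of_smul_mem hx fun s hs ↦ Submodule.mem_map_of_mem hs))

/-- Let `(R, m, k)` be a one-dimensional Noetherian reduced local ring with
finitely generated integral closure `S` (in the total ring of fractions), uncountable residue
field `k`, and `x` a minimal reduction of `m`.  Then
`λ_R( ̄(m²) / xm ) = dim_k( (R + mS) / (R + m²S) )` (both sides computed as `R`-module
lengths; the right-hand module is a `k`-vector space so its length is its `k`-dimension). -/
theorem stmt7 (R S : Type*) [CommRing R] [IsLocalRing R] [IsNoetherianRing R] [IsReduced R]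
    (hdim : ringKrullDim R = 1)
    (hk : ¬ (Set.univ : Set (R ⧸ maximalIdeal R)).Countable)
    [CommRing S] [Algebra R S] [Algebra S (FractionRing R)]
    [IsScalarTower R S (FractionRing R)]
    [IsIntegralClosure S R (FractionRing R)]
    [Module.Finite R S]
    (x : R) (hx : x ∈ maximalIdeal R)
    (hred : ∃ n : ℕ, maximalIdeal R ^ (n + 1) = Ideal.span {x} * maximalIdeal R ^ n)
    (A B : Submodule R S)
    (hA : A = (1 : Submodule R S) ⊔ (maximalIdeal R • ⊤))
    (hB : B = (1 : Submodule R S) ⊔ ((maximalIdeal R ^ 2) • ⊤)) :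
    moduleLength R
      ((idealIntClI (maximalIdeal R ^ 2)) ⧸
        (Submodule.comap (idealIntClI (maximalIdeal R ^ 2)).subtype
          ((Ideal.span {x} * maximalIdeal R : Ideal R) : Submodule R R)))
    = moduleLength R (A ⧸ (Submodule.comap A.subtype B)) := by
  subst hA hB
  have hR : ¬ IsField R := fun h ↦ by simp [ringKrullDim_eq_zero_of_isField h] at hdim
  have := Ring.krullDimLE_iff.2 hdim.le
  obtain ⟨n, hn⟩ := hred
  have hx' := mem_nonZeroDivisors_of_maximalIdeal_pow_le hR (hn.trans_le Ideal.mul_le_left)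
  have hlen := stmt7_general (S := S) (FractionRing R) hx hx' hn
  rwa [idealIntClI_eq_self_of_isRadical (maximalIdeal.isMaximal R).isPrime.isRadical] at hlen
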